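/- Let n ≥ 1, d ∈ ℝ^n with d > 0 entrywise, and y ∈ ℝ^n. If the extreme point map E_{d,y} : S_n → ℝ^n is not injective, then at least one of the following holds: (i) the map i ↦ y_i/d_i is not injective on {1,…,n}, i.e., there exist i ≠ j with y_i/d_i = y_j/d_j; or (ii) d is not well-structured. -/

import Mathlib

open Finset

noncomputable def th {n : ℕ} (d y : Fin n → ℝ) (c : ℝ) : ℝ :=
  sInf ((fun i => (∑ j, max (y j - y i / d i * d j) 0) + y i / d i * c) ''
    {i : Fin n | 0 < d i})

noncomputable def psum {n : ℕ} (d : Fin n → ℝ) (σ : Equiv.Perm (Fin n)) (j : ℕ) : ℝ :=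
  ∑ i ∈ Finset.univ.filter (fun i : Fin n => (i : ℕ) < j), d (σ i)

noncomputable def Emap {n : ℕ} (d y : Fin n → ℝ) (σ : Equiv.Perm (Fin n)) : Fin n → ℝ :=
  fun k => th d y (psum d σ ((σ.symm k : ℕ) + 1)) - th d y (psum d σ (σ.symm k : ℕ))

def dStoch {n : ℕ} (d : Fin n → ℝ) (A : Matrix (Fin n) (Fin n) ℝ) : Prop :=
  (∀ i j, 0 ≤ A i j) ∧ (∀ j, ∑ i, A i j = 1) ∧ A.mulVec d = d

def Mset {n : ℕ} (d y : Fin n → ℝ) : Set (Fin n → ℝ) :=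
  {x | ∃ A : Matrix (Fin n) (Fin n) ℝ, dStoch d A ∧ A.mulVec y = x}

noncomputable def Aentry {n : ℕ} (d : Fin n → ℝ) (σ τ : Equiv.Perm (Fin n))
    (α : ℕ → Fin n) (j k : Fin n) : ℝ :=
  if k = α j.val ∧ (α j.val).val < (α (j.val + 1)).val then
    (psum d τ ((α j.val).val + 1) - psum d σ j.val) / d (τ (α j.val))
  else if (α j.val).val < k.val ∧ k.val < (α (j.val + 1)).val then 1
  else if (α j.val).val < (α (j.val + 1)).val ∧ k = α (j.val + 1) then
    (psum d σ (j.val + 1) - psum d τ (α (j.val + 1)).val) / d (τ (α (j.val + 1)))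
  else if α j.val = α (j.val + 1) ∧ k = α (j.val + 1) then
    d (σ j) / d (τ (α (j.val + 1)))
  else 0

noncomputable def Amat {n : ℕ} (d : Fin n → ℝ) (σ τ : Equiv.Perm (Fin n))
    (α : ℕ → Fin n) : Matrix (Fin n) (Fin n) ℝ :=
  Matrix.of fun p q => Aentry d σ τ α (σ.symm p) (τ.symm q)

/-
The curve `th d y` is an infimum of finitely many lines, hence concave, and if `ρ` sorts the ratios
`y i / d i` in strictly decreasing order then it has a strict kink at every interior elbow
`psum d ρ m`. If `σ` puts the index `k` at an earlier position than `τ` does, the increments of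
`th d y` that define the `k`-th coordinates of `Emap d y σ` and `Emap d y τ` are taken over two
intervals of the same length `d k`, the first lying further left. Well-structuredness places an
elbow strictly between the left end of the first interval and the right end of the second, and its
kink makes the first increment strictly larger: a coordinate determines the position.
-/

section Slope

variable {𝕜 : Type*} [Field 𝕜] [LinearOrder 𝕜] [IsStrictOrderedRing 𝕜] {f : 𝕜 → 𝕜} {s : Set 𝕜}
  {u v x : 𝕜}

lemma slope_lt_slope_left_iff (hux : u < x) (hxv : x < v) :
    slope f u v < slope f u x ↔ slope f x v < slope f u x := by
  simp only [slope_def_field]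
  rw [div_lt_div_iff₀ (by linarith) (by linarith), div_lt_div_iff₀ (by linarith) (by linarith)]
  constructor <;> intro h <;> linarith

lemma slope_lt_slope_right_iff (hux : u < x) (hxv : x < v) :
    slope f x v < slope f u v ↔ slope f x v < slope f u x := by
  simp only [slope_def_field]
  rw [div_lt_div_iff₀ (by linarith) (by linarith), div_lt_div_iff₀ (by linarith) (by linarith)]
  constructor <;> intro h <;> linarith

lemma slope_lt_slope_of_concaveOn {c : 𝕜} (hf : ConcaveOn 𝕜 s f) (hu : u ∈ s) (hv : v ∈ s)
    (huc : u < c) (hcv : c < v) (hc : slope f c v < slope f u c) (hux : u < x) (hxv : x < v) :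
    slope f x v < slope f u x := by
  have hcs : c ∈ s := hf.1.ordConnected.out hu hv ⟨huc.le, hcv.le⟩
  have hxs : x ∈ s := hf.1.ordConnected.out hu hv ⟨hux.le, hxv.le⟩
  rcases le_total x c with hxc | hcx
  · rw [← slope_lt_slope_left_iff hux hxv]
    calc slope f u v < slope f u c := (slope_lt_slope_left_iff huc hcv).2 hc
      _ ≤ slope f u x := hf.slope_anti hu ⟨hxs, hux.ne'⟩ ⟨hcs, huc.ne'⟩ hxc
  · rw [← slope_lt_slope_right_iff hux hxv]
    calc slope f x v = slope f v x := slope_comm f x v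
      _ ≤ slope f v c := hf.slope_anti hv ⟨hcs, hcv.ne⟩ ⟨hxs, hxv.ne⟩ hcx
      _ = slope f c v := slope_comm f v c
      _ < slope f u v := (slope_lt_slope_right_iff huc hcv).2 hc

lemma sub_lt_sub_of_concaveOn {u' c l : 𝕜} (hf : ConcaveOn 𝕜 s f) (hu : u ∈ s)
    (hv : u' + l ∈ s) (huu' : u < u') (hl : 0 < l) (huc : u < c) (hcv : c < u' + l)
    (hc : slope f c (u' + l) < slope f u c) :
    f (u' + l) - f u' < f (u + l) - f u := by
  have above_chord {x : 𝕜} (hux : u < x) (hxv : x < u' + l) :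
      slope f u (u' + l) * (x - u) < f x - f u := by
    rw [← lt_div_iff₀ (sub_pos.2 hux), ← slope_def_field, slope_lt_slope_left_iff hux hxv]
    exact slope_lt_slope_of_concaveOn hf hu hv huc hcv hc hux hxv
  have chord : (u' + l - u) * slope f u (u' + l) = f (u' + l) - f u := sub_smul_slope f u (u' + l)
  linarith [above_chord (x := u + l) (by linarith) (by linarith),
    above_chord huu' (by linarith)]

end Slope

lemma exists_strictAnti_comp_perm {α : Type*} [LinearOrder α] {n : ℕ} {f : Fin n → α}
    (hf : Function.Injective f) : ∃ ρ : Equiv.Perm (Fin n), StrictAnti (f ∘ ρ) :=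
  ⟨Tuple.sort (OrderDual.toDual ∘ f),
    ((Tuple.monotone_sort (OrderDual.toDual ∘ f)).strictMono_of_injective
      (OrderDual.toDual.injective.comp (hf.comp (Equiv.injective _)))).dual_right⟩

section ThermomajorizationCurve

variable {n : ℕ} {d y : Fin n → ℝ} {ρ : Equiv.Perm (Fin n)}

lemma psum_succ (d : Fin n → ℝ) (σ : Equiv.Perm (Fin n)) (k : Fin n) :
    psum d σ (k + 1) = psum d σ k + d (σ k) := by
  have insert_self : univ.filter (fun i : Fin n => (i : ℕ) < k + 1) =
      insert k (univ.filter fun i : Fin n => (i : ℕ) < k) := by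
    ext i
    simp only [mem_filter, mem_univ, true_and, mem_insert, Fin.ext_iff]
    omega
  rw [psum, insert_self, sum_insert (by simp), add_comm, psum]

lemma psum_symm_succ (d : Fin n → ℝ) (σ : Equiv.Perm (Fin n)) (k : Fin n) :
    psum d σ (σ.symm k + 1) = psum d σ (σ.symm k) + d k := by
  rw [psum_succ, Equiv.apply_symm_apply]

/-- The notion of a well-structured vector. It makes the partial sums of `d` along different
orderings of the entries interlace. -/
def WellStructured (d : Fin n → ℝ) : Prop :=
  ∀ I J : Finset (Fin n), I.card < J.card → ∑ i ∈ I, d i < ∑ i ∈ J, d i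

lemma WellStructured.psum_lt_psum (hw : WellStructured d) (σ τ : Equiv.Perm (Fin n)) {j m : ℕ}
    (hjm : j < m) (hm : m ≤ n) : psum d σ j < psum d τ m := by
  have psum_eq (σ : Equiv.Perm (Fin n)) (j : ℕ) :
      psum d σ j = ∑ i ∈ (univ.filter fun i : Fin n => (i : ℕ) < j).map σ.toEmbedding, d i := by
    simp [psum, sum_map]
  rw [psum_eq, psum_eq]
  apply hw
  rw [card_map, card_map, Fin.card_filter_val_lt, Fin.card_filter_val_lt]
  omega

/-- The line of slope `s` from the family whose minimum over `s = y i / d i` is the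
thermomajorization curve `th d y`. -/
noncomputable def supportLine (d y : Fin n → ℝ) (s c : ℝ) : ℝ :=
  ∑ j, max (y j - s * d j) 0 + s * c

lemma th_le_supportLine (y : Fin n → ℝ) {i : Fin n} (hi : 0 < d i) (c : ℝ) :
    th d y c ≤ supportLine d y (y i / d i) c :=
  csInf_le (Set.toFinite _).bddBelow ⟨i, hi, rfl⟩

lemma exists_th_eq_supportLine (hd : ∃ i, 0 < d i) (y : Fin n → ℝ) (c : ℝ) :
    ∃ i, 0 < d i ∧ th d y c = supportLine d y (y i / d i) c := by
  have hne : {i : Fin n | 0 < d i}.Nonempty := hd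
  obtain ⟨i, hi, hc⟩ := (hne.image fun i =>
    supportLine d y (y i / d i) c).csInf_mem (Set.toFinite _)
  exact ⟨i, hi, hc.symm⟩

lemma concaveOn_th (hd : ∃ i, 0 < d i) (y : Fin n → ℝ) : ConcaveOn ℝ Set.univ (th d y) := by
  refine ⟨convex_univ, fun p _ q _ a b ha hb hab => ?_⟩
  obtain ⟨i, hi, hc⟩ := exists_th_eq_supportLine hd y (a • p + b • q)
  calc a • th d y p + b • th d y q
      ≤ a • supportLine d y (y i / d i) p + b • supportLine d y (y i / d i) q := by
        gcongr <;> exact th_le_supportLine y hi _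
    _ = supportLine d y (y i / d i) (a • p + b • q) := by
        simp only [supportLine, smul_eq_mul]
        linear_combination (∑ j, max (y j - y i / d i * d j) 0) * hab
    _ = th d y (a • p + b • q) := hc.symm

lemma supportLine_psum (d y : Fin n → ℝ) (ρ : Equiv.Perm (Fin n)) (s : ℝ) (m : ℕ) :
    supportLine d y s (psum d ρ m) = ∑ k : Fin n,
      (max (y (ρ k) - s * d (ρ k)) 0 + if (k : ℕ) < m then s * d (ρ k) else 0) := by
  rw [supportLine, psum, sum_add_distrib, ← sum_filter, mul_sum,
    Equiv.sum_comp ρ fun j => max (y j - s * d j) 0]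

lemma psum_le_supportLine_psum (d y : Fin n → ℝ) (ρ : Equiv.Perm (Fin n)) (s : ℝ) (m : ℕ) :
    psum y ρ m ≤ supportLine d y s (psum d ρ m) := by
  rw [supportLine_psum, psum, sum_filter]
  refine sum_le_sum fun k _ => ?_
  split_ifs
  · linarith [le_max_left (y (ρ k) - s * d (ρ k)) 0]
  · linarith [le_max_right (y (ρ k) - s * d (ρ k)) 0]

lemma supportLine_psum_eq_psum {s : ℝ} {m : ℕ}
    (hlt : ∀ k : Fin n, (k : ℕ) < m → s * d (ρ k) ≤ y (ρ k))
    (hge : ∀ k : Fin n, m ≤ (k : ℕ) → y (ρ k) ≤ s * d (ρ k)) :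
    supportLine d y s (psum d ρ m) = psum y ρ m := by
  rw [supportLine_psum, psum, sum_filter]
  refine sum_congr rfl fun k _ => ?_
  split_ifs with hk
  · rw [max_eq_left (sub_nonneg.2 (hlt k hk)), sub_add_cancel]
  · rw [max_eq_right (sub_nonpos.2 (hge k (not_lt.1 hk))), add_zero]

lemma psum_le_th_psum (hd : ∃ i, 0 < d i) (y : Fin n → ℝ) (ρ : Equiv.Perm (Fin n)) (m : ℕ) :
    psum y ρ m ≤ th d y (psum d ρ m) := by
  obtain ⟨i, -, hc⟩ := exists_th_eq_supportLine hd y (psum d ρ m)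
  exact hc ▸ psum_le_supportLine_psum d y ρ _ m

lemma th_le_th_psum_add (hd : ∀ i, 0 < d i) (hρ : Antitone fun k => y (ρ k) / d (ρ k))
    {k : Fin n} {m : ℕ} (hkm : (k : ℕ) ≤ m) (hmk : m ≤ k + 1) (c : ℝ) :
    th d y c ≤ th d y (psum d ρ m) + y (ρ k) / d (ρ k) * (c - psum d ρ m) := by
  have elbow : supportLine d y (y (ρ k) / d (ρ k)) (psum d ρ m) = psum y ρ m :=
    supportLine_psum_eq_psum
      (fun i hi => (le_div_iff₀ (hd _)).1 (hρ (Fin.le_def.2 (by omega))))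
      (fun i hi => (div_le_iff₀ (hd _)).1 (hρ (Fin.le_def.2 (by omega))))
  calc th d y c ≤ supportLine d y (y (ρ k) / d (ρ k)) c := th_le_supportLine y (hd _) c
    _ = psum y ρ m + y (ρ k) / d (ρ k) * (c - psum d ρ m) := by
        rw [← elbow, supportLine, supportLine]
        ring
    _ ≤ th d y (psum d ρ m) + y (ρ k) / d (ρ k) * (c - psum d ρ m) := by
        gcongr
        exact psum_le_th_psum ⟨_, hd k⟩ y ρ m

lemma slope_th_lt_slope_th (hd : ∀ i, 0 < d i) (hρ : StrictAnti fun k => y (ρ k) / d (ρ k))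
    {m : ℕ} (hm : m + 1 < n) {u v : ℝ} (hu : u < psum d ρ (m + 1)) (hv : psum d ρ (m + 1) < v) :
    slope (th d y) (psum d ρ (m + 1)) v < slope (th d y) u (psum d ρ (m + 1)) := by
  let k : Fin n := ⟨m, by omega⟩
  let k' : Fin n := ⟨m + 1, hm⟩
  have left := th_le_th_psum_add hd hρ.antitone (k := k) (m := m + 1) (Nat.le_succ m) le_rfl u
  have right := th_le_th_psum_add hd hρ.antitone (k := k') (m := m + 1) le_rfl (Nat.le_succ _) v
  simp only [slope_def_field]
  calc (th d y v - th d y (psum d ρ (m + 1))) / (v - psum d ρ (m + 1))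
      ≤ y (ρ k') / d (ρ k') := by
        rw [div_le_iff₀ (sub_pos.2 hv)]
        linarith
    _ < y (ρ k) / d (ρ k) := hρ (Fin.lt_def.2 (Nat.lt_succ_self m))
    _ ≤ (th d y (psum d ρ (m + 1)) - th d y u) / (psum d ρ (m + 1) - u) := by
        rw [le_div_iff₀ (sub_pos.2 hu)]
        linarith

lemma WellStructured.emap_lt_emap (hw : WellStructured d) (hd : ∀ i, 0 < d i)
    (hs : Function.Injective fun i => y i / d i) {σ τ : Equiv.Perm (Fin n)} {k : Fin n}
    (hk : σ.symm k < τ.symm k) : Emap d y τ k < Emap d y σ k := by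
  obtain ⟨ρ, hρ⟩ := exists_strictAnti_comp_perm hs
  have hkn : (σ.symm k : ℕ) + 1 < n := by omega
  have starts_lt : psum d σ (σ.symm k) < psum d τ (τ.symm k) := hw.psum_lt_psum σ τ hk (by omega)
  have start_lt_elbow : psum d σ (σ.symm k) < psum d ρ (σ.symm k + 1) :=
    hw.psum_lt_psum σ ρ (Nat.lt_succ_self _) hkn.le
  have elbow_lt_end : psum d ρ (σ.symm k + 1) < psum d τ (τ.symm k) + d k := by
    rw [← psum_symm_succ]
    exact hw.psum_lt_psum ρ τ (Nat.succ_lt_succ hk) (τ.symm k).isLt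
  simp only [Emap, psum_symm_succ]
  exact sub_lt_sub_of_concaveOn (concaveOn_th ⟨k, hd k⟩ y) (Set.mem_univ _)
    (Set.mem_univ _) starts_lt (hd k) start_lt_elbow elbow_lt_end
    (slope_th_lt_slope_th hd hρ hkn start_lt_elbow elbow_lt_end)

lemma WellStructured.emap_injective (hw : WellStructured d) (hd : ∀ i, 0 < d i)
    (hs : Function.Injective fun i => y i / d i) : Function.Injective (Emap d y) := by
  intro σ τ h
  refine Equiv.symm_bijective.injective (Equiv.ext fun k => le_antisymm ?_ ?_)
  · exact not_lt.1 fun hk => (hw.emap_lt_emap hd hs hk).ne (congrFun h k)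
  · exact not_lt.1 fun hk => (hw.emap_lt_emap hd hs hk).ne' (congrFun h k)

end ThermomajorizationCurve

/-- If the extreme point map is not injective then either y/d is degenerate or
d is not well-structured. -/
theorem stmt13 (n : ℕ) (hn : 1 ≤ n) (d : Fin n → ℝ) (hd : ∀ i, 0 < d i)
    (y : Fin n → ℝ) (hnoninj : ¬ Function.Injective (Emap d y)) :
    (∃ i j : Fin n, i ≠ j ∧ y i / d i = y j / d j) ∨
      ¬ (∀ I J : Finset (Fin n), I.card < J.card →
          ∑ i ∈ I, d i < ∑ i ∈ J, d i) := by
  contrapose! hnoninj with h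
  obtain ⟨hs, hw⟩ := h
  have hinj : Function.Injective fun i => y i / d i :=
    fun i j hij => by_contra fun hne => hs i j hne hij
  exact WellStructured.emap_injective hw hd hinj
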